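/- arXiv:2511.01587 — 3 statements merged into one kernel-verified Lean document; each statement's English description precedes it below -/
import Mathlib

section
/- The logarithmic ℓ2-norm of the full semidiscretisation matrix satisfies μ₂[A] ≤ C̃, where C̃ = (|w₋₁| − 10w₂)(α + β) − (r + λ). -/
open Matrix

/-- Central second-difference matrix on a uniform mesh with mesh width Δ and
homogeneous Dirichlet boundary conditions (out-of-range values taken zero). -/
noncomputable def D2mat (m : ℕ) (Δ : ℝ) : Matrix (Fin (m+1)) (Fin (m+1)) ℝ :=
  Matrix.of fun i k =>
    ((if (k.val : ℤ) = (i.val : ℤ) - 1 then 1 else 0)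
      + (if k = i then -2 else 0)
      + (if (k.val : ℤ) = (i.val : ℤ) + 1 then 1 else 0)) / Δ^2

/-- Upwind first-derivative matrix Ã for the general second-order scheme with
weights (w₋₁,w₀,w₁,w₂), mesh width Δ, upwind direction given by the sign of the
convection coefficient c, and homogeneous Dirichlet boundary conditions
(out-of-range values taken zero). -/
noncomputable def Atilde (m : ℕ) (Δ : ℝ) (c : ℕ → ℝ) (wm1 w0 w1 w2 : ℝ) :
    Matrix (Fin (m+1)) (Fin (m+1)) ℝ :=
  Matrix.of fun i k =>
    if 0 < c i.val then
      ((if (k.val : ℤ) = (i.val : ℤ) + 2 then w2 else 0)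
        + (if (k.val : ℤ) = (i.val : ℤ) + 1 then w1 else 0)
        + (if k = i then w0 else 0)
        + (if (k.val : ℤ) = (i.val : ℤ) - 1 then wm1 else 0)) / Δ
    else if c i.val < 0 then
      ((if (k.val : ℤ) = (i.val : ℤ) + 1 then -wm1 else 0)
        + (if k = i then -w0 else 0)
        + (if (k.val : ℤ) = (i.val : ℤ) - 1 then -w1 else 0)
        + (if (k.val : ℤ) = (i.val : ℤ) - 2 then -w2 else 0)) / Δ
    else 0

/-- Zero extension of a grid vector to all integer indices. -/
noncomputable def extZ (m : ℕ) (v : Fin (m+1) → ℝ) (z : ℤ) : ℝ :=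
  if h : 0 ≤ z ∧ z < m + 1 then v ⟨z.toNat, by omega⟩ else 0

lemma extZ_coe (m : ℕ) (v : Fin (m+1) → ℝ) (i : Fin (m+1)) : extZ m v (i.val : ℤ) = v i := by
  have := i.isLt
  unfold extZ
  rw [dif_pos (by omega)]
  congr 1

lemma extZ_of_not (m : ℕ) (v : Fin (m+1) → ℝ) (z : ℤ) (h : ¬ (0 ≤ z ∧ z < m + 1)) :
    extZ m v z = 0 := by
  unfold extZ
  rw [dif_neg h]

lemma sum_ite_ext (m : ℕ) (v : Fin (m+1) → ℝ) (z : ℤ) (w : ℝ) :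
    ∑ k : Fin (m+1), (if (k.val : ℤ) = z then w else 0) * v k = w * extZ m v z := by
  by_cases h : 0 ≤ z ∧ z < m + 1
  · rw [Finset.sum_eq_single (⟨z.toNat, by omega⟩ : Fin (m+1))]
    · unfold extZ
      rw [dif_pos h, if_pos (by simp; omega)]
    · intro k _ hk
      rw [if_neg, zero_mul]
      intro hz
      apply hk
      ext
      simp
      omega
    · simp
  · rw [extZ_of_not m v z h, mul_zero]
    apply Finset.sum_eq_zero
    intro k _
    have := k.isLt
    rw [if_neg (by omega), zero_mul]

lemma sum_ite_diag (m : ℕ) (v : Fin (m+1) → ℝ) (i : Fin (m+1)) (w : ℝ) :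
    ∑ k : Fin (m+1), (if k = i then w else 0) * v k = w * extZ m v (i.val : ℤ) := by
  rw [extZ_coe]
  simp

lemma D2_row (m : ℕ) (Δ : ℝ) (v : Fin (m+1) → ℝ) (i : Fin (m+1)) :
    (D2mat m Δ).mulVec v i =
      (extZ m v ((i.val : ℤ) - 1) - 2 * extZ m v (i.val : ℤ) + extZ m v ((i.val : ℤ) + 1)) / Δ^2 := by
  have h : (D2mat m Δ).mulVec v i =
    (∑ k : Fin (m+1), (if (k.val : ℤ) = (i.val : ℤ) - 1 then (1:ℝ) else 0) * v k
      + ∑ k : Fin (m+1), (if k = i then (-2:ℝ) else 0) * v k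
      + ∑ k : Fin (m+1), (if (k.val : ℤ) = (i.val : ℤ) + 1 then (1:ℝ) else 0) * v k) / Δ^2 := by
    rw [← Finset.sum_add_distrib, ← Finset.sum_add_distrib, Finset.sum_div]
    simp only [D2mat, Matrix.mulVec, dotProduct, Matrix.of_apply]
    apply Finset.sum_congr rfl
    intro k _
    ring
  rw [h, sum_ite_ext, sum_ite_diag, sum_ite_ext]
  ring

lemma At_row_pos (m : ℕ) (Δ : ℝ) (c : ℕ → ℝ) (wm1 w0 w1 w2 : ℝ) (v : Fin (m+1) → ℝ)
    (i : Fin (m+1)) (hc : 0 < c i.val) :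
    (Atilde m Δ c wm1 w0 w1 w2).mulVec v i =
      (w2 * extZ m v ((i.val : ℤ) + 2) + w1 * extZ m v ((i.val : ℤ) + 1)
        + w0 * extZ m v (i.val : ℤ) + wm1 * extZ m v ((i.val : ℤ) - 1)) / Δ := by
  rw [← sum_ite_ext, ← sum_ite_ext, ← sum_ite_diag, ← sum_ite_ext,
    ← Finset.sum_add_distrib, ← Finset.sum_add_distrib, ← Finset.sum_add_distrib, Finset.sum_div]
  simp only [Atilde, Matrix.mulVec, dotProduct, Matrix.of_apply, if_pos hc]
  apply Finset.sum_congr rfl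
  intro k _
  ring

lemma At_row_neg (m : ℕ) (Δ : ℝ) (c : ℕ → ℝ) (wm1 w0 w1 w2 : ℝ) (v : Fin (m+1) → ℝ)
    (i : Fin (m+1)) (hc : c i.val < 0) :
    (Atilde m Δ c wm1 w0 w1 w2).mulVec v i =
      ((-wm1) * extZ m v ((i.val : ℤ) + 1) + (-w0) * extZ m v (i.val : ℤ)
        + (-w1) * extZ m v ((i.val : ℤ) - 1) + (-w2) * extZ m v ((i.val : ℤ) - 2)) / Δ := by
  rw [← sum_ite_diag, ← sum_ite_ext, ← sum_ite_ext, ← sum_ite_ext,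
    ← Finset.sum_add_distrib, ← Finset.sum_add_distrib, ← Finset.sum_add_distrib, Finset.sum_div]
  simp only [Atilde, Matrix.mulVec, dotProduct, Matrix.of_apply, if_pos hc, if_neg (not_lt.mpr hc.le)]
  apply Finset.sum_congr rfl
  intro k _
  ring

lemma D2_nonpos (m : ℕ) (Δ : ℝ) (v : Fin (m+1) → ℝ) :
    (D2mat m Δ).mulVec v ⬝ᵥ v ≤ 0 := by
  have h1 : (D2mat m Δ).mulVec v ⬝ᵥ v = ∑ i ∈ Finset.range (m+1),
      ((extZ m v ((i : ℤ) - 1) - 2 * extZ m v (i : ℤ) + extZ m v ((i : ℤ) + 1)) / Δ^2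
        * extZ m v (i : ℤ)) := by
    rw [Finset.sum_range]
    simp only [dotProduct, D2_row]
    apply Finset.sum_congr rfl
    intro i _
    rw [extZ_coe]
  have key : ∀ (f : ℤ → ℝ) (n : ℕ), ∑ i ∈ Finset.range n,
      ((f ((i : ℤ) - 1) - 2 * f (i : ℤ) + f ((i : ℤ) + 1)) * f (i : ℤ))
      ≤ (f n ^ 2 - f (n - 1) ^ 2) / 2 - (f 0 ^ 2 - f (-1) ^ 2) / 2 := by
    intro f n
    induction n with
    | zero => simp
    | succ n ih =>
      rw [Finset.sum_range_succ]
      push_cast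
      rw [show (n : ℤ) + 1 - 1 = n by ring]
      nlinarith [sq_nonneg (f (n - 1) - f n), sq_nonneg (f (n + 1) - f n)]
  have h2 := key (extZ m v) (m+1)
  rw [extZ_of_not m v ((m+1 : ℕ) : ℤ) (by push_cast; omega), extZ_of_not m v (-1) (by omega)] at h2
  have h3 : (D2mat m Δ).mulVec v ⬝ᵥ v = (∑ i ∈ Finset.range (m+1),
      ((extZ m v ((i : ℤ) - 1) - 2 * extZ m v (i : ℤ) + extZ m v ((i : ℤ) + 1))
        * extZ m v (i : ℤ))) / Δ^2 := by
    rw [h1, Finset.sum_div]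
    apply Finset.sum_congr rfl
    intro i _
    ring
  rw [h3]
  apply div_nonpos_of_nonpos_of_nonneg _ (sq_nonneg Δ)
  refine h2.trans ?_
  nlinarith [sq_nonneg (extZ m v (((m+1 : ℕ) : ℤ) - 1)), sq_nonneg (extZ m v 0)]

/-- One-sided energy estimate (a weighted form of the BDF2 identity). -/
lemma half_bound (wm1 w0 w1 w2 : ℝ)
    (hw1 : wm1 + w0 + w1 + w2 = 0) (hw2 : -wm1 + w1 + 2*w2 = 1)
    (hw3 : wm1 + w1 + 4*w2 = 0) (hw4 : w2 ≤ 0) (u : ℤ → ℝ) (P : ℕ) :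
    ∑ p ∈ Finset.range P, ((p : ℝ) + 1) * (w2 * u (p - 1) + w1 * u p + w0 * u (p + 1)
        + wm1 * u (p + 2)) * u (p + 1)
    ≤ (-w2) * (5 * (u 0 ^ 2 + ∑ p ∈ Finset.range P, u (p + 1) ^ 2) + 3/2 * u (-1) ^ 2
        - 5 * u P ^ 2 - 3/2 * u (P - 1) ^ 2)
      + |wm1| * (u 0 ^ 2 / 2 + ∑ p ∈ Finset.range P, u (p + 1) ^ 2 - u P ^ 2 / 2)
      + w2 / 2 * P * (u P ^ 2 + (2 * u P - u (P - 1)) ^ 2)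
      + wm1 * P * u P * u (P + 1) := by
  have e1 : w1 = -wm1 - 4 * w2 := by linarith
  have e0 : w0 = 3 * w2 := by linarith
  subst e1
  subst e0
  induction P with
  | zero => simp
  | succ n ih =>
    rw [Finset.sum_range_succ, Finset.sum_range_succ]
    push_cast
    rw [show (n : ℤ) + 1 - 1 = n by ring, show (n : ℤ) + 1 + 1 = n + 2 by ring]
    generalize u (n - 1) = A at *
    generalize u n = B at *
    generalize u (n + 1) = C at *
    generalize u (n + 2) = D at *
    generalize u 0 = E at *
    generalize u (-1) = F at *
    set S := ∑ p ∈ Finset.range n, u (p + 1) ^ 2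
    refine (add_le_add_left ih _).trans ?_
    have hn : (0:ℝ) ≤ n := Nat.cast_nonneg n
    have i1 : 0 ≤ (-w2) * ((n + 1) * (C - 2 * B + A) ^ 2) :=
      mul_nonneg (by linarith) (by positivity)
    have i2 : 0 ≤ (-w2) * (2 * B ^ 2 + 2 * A ^ 2 + 4 * A * B) :=
      mul_nonneg (by linarith) (by nlinarith [sq_nonneg (A + B)])
    have i3 : 0 ≤ |wm1| * (B ^ 2 + C ^ 2) / 2 + wm1 * B * C := by
      rcases abs_cases wm1 with ⟨h, h'⟩ | ⟨h, h'⟩ <;> rw [h]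
      · nlinarith [mul_nonneg h' (sq_nonneg (B + C))]
      · nlinarith [mul_nonneg (neg_nonneg.mpr h'.le) (sq_nonneg (B - C))]
    linarith

lemma half_bound' (wm1 w0 w1 w2 : ℝ)
    (hw1 : wm1 + w0 + w1 + w2 = 0) (hw2 : -wm1 + w1 + 2*w2 = 1)
    (hw3 : wm1 + w1 + 4*w2 = 0) (hw4 : w2 ≤ 0) (u : ℤ → ℝ) (P : ℕ) (hP : u (P + 1) = 0) :
    ∑ p ∈ Finset.range P, ((p : ℝ) + 1) * (w2 * u (p - 1) + w1 * u p + w0 * u (p + 1)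
        + wm1 * u (p + 2)) * u (p + 1)
    ≤ (-w2) * (5 * (u 0 ^ 2 + ∑ p ∈ Finset.range P, u (p + 1) ^ 2) + 3/2 * u (-1) ^ 2)
      + |wm1| * (u 0 ^ 2 / 2 + ∑ p ∈ Finset.range P, u (p + 1) ^ 2) := by
  have h := half_bound wm1 w0 w1 w2 hw1 hw2 hw3 hw4 u P
  rw [hP] at h
  have i1 : 0 ≤ (-w2) * (5 * u P ^ 2 + 3/2 * u (P - 1) ^ 2) :=
    mul_nonneg (by linarith) (by positivity)
  have i2 : 0 ≤ |wm1| * (u P ^ 2 / 2) := by positivity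
  have i3 : 0 ≤ (-w2) * (P * (u P ^ 2 + (2 * u P - u (P - 1)) ^ 2)) :=
    mul_nonneg (by linarith) (by positivity)
  linarith

lemma split_sum (g : ℤ → ℝ) (p q : ℕ) :
    ∑ i ∈ Finset.range (p + 1 + q), g (i : ℤ) =
      ∑ k ∈ Finset.range p, g ((p : ℤ) - (k + 1)) + g p
        + ∑ k ∈ Finset.range q, g ((p : ℤ) + (k + 1)) := by
  rw [Finset.sum_range_add, Finset.sum_range_succ]
  congr 1
  · congr 1
    rw [← Finset.sum_range_reflect]
    apply Finset.sum_congr rfl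
    intro k hk
    have := Finset.mem_range.mp hk
    congr 1
    omega
  · apply Finset.sum_congr rfl
    intro k _
    congr 1
    push_cast
    ring

lemma conv_bound (wm1 w0 w1 w2 : ℝ)
    (hw1 : wm1 + w0 + w1 + w2 = 0) (hw2 : -wm1 + w1 + 2*w2 = 1)
    (hw3 : wm1 + w1 + 4*w2 = 0) (hw4 : w2 ≤ 0) (m : ℕ) (hm : 4 ≤ m) (Δ α : ℝ) (hΔ : 0 < Δ)
    (hα : 0 < α) (i₀ : ℕ) (hl : 2 ≤ i₀) (hu : i₀ ≤ m - 2) (c : ℕ → ℝ)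
    (hc : ∀ i : ℕ, c i = α * Δ * ((i₀ : ℝ) - i)) (v : Fin (m+1) → ℝ) :
    (Matrix.diagonal (fun i : Fin (m+1) => c i.val) * Atilde m Δ c wm1 w0 w1 w2).mulVec v ⬝ᵥ v
      ≤ (|wm1| - 10*w2) * α * (v ⬝ᵥ v) := by
  set f := extZ m v with hf
  set g : ℤ → ℝ := fun z => α * ((if z < i₀ then ((i₀ : ℝ) - z) *
      (w2 * f (z + 2) + w1 * f (z + 1) + w0 * f z + wm1 * f (z - 1)) else
      ((z : ℝ) - i₀) * (wm1 * f (z + 1) + w0 * f z + w1 * f (z - 1) + w2 * f (z - 2))) * f z) with hg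
  have h1 : (Matrix.diagonal (fun i : Fin (m+1) => c i.val)
      * Atilde m Δ c wm1 w0 w1 w2).mulVec v ⬝ᵥ v = ∑ i ∈ Finset.range (m+1), g i := by
    rw [Finset.sum_range, ← Matrix.mulVec_mulVec]
    simp only [dotProduct, Matrix.mulVec_diagonal]
    apply Finset.sum_congr rfl
    intro i _
    rw [← extZ_coe m v i]
    simp only [hg, ← hf]
    have hαΔ : 0 < α * Δ := mul_pos hα hΔ
    rcases lt_trichotomy i.val i₀ with h | h | h
    · have hi : (i.val : ℝ) < i₀ := by exact_mod_cast h
      rw [if_pos (by exact_mod_cast h), At_row_pos _ _ _ _ _ _ _ _ _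
        (by rw [hc]; exact mul_pos hαΔ (by linarith)), hc, ← hf]
      push_cast
      field_simp
    · rw [if_neg (by omega), hc, h]
      simp
    · have hi : (i₀ : ℝ) < i.val := by exact_mod_cast h
      rw [if_neg (by omega), At_row_neg _ _ _ _ _ _ _ _ _
        (by rw [hc]; exact mul_neg_of_pos_of_neg hαΔ (by linarith)), hc, ← hf]
      push_cast
      field_simp
      ring
  have h2 : v ⬝ᵥ v = ∑ i ∈ Finset.range (m+1), (fun z : ℤ => f z ^ 2) i := by
    rw [Finset.sum_range]
    simp only [dotProduct]
    apply Finset.sum_congr rfl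
    intro i _
    rw [← extZ_coe m v i, sq]
  obtain ⟨q, hq⟩ : ∃ q, m + 1 = i₀ + 1 + (q + 1) := ⟨m - i₀ - 1, by omega⟩
  obtain ⟨p, rfl⟩ : ∃ p, i₀ = p + 1 := ⟨i₀ - 1, by omega⟩
  rw [h1, h2, hq, split_sum, split_sum (fun z : ℤ => f z ^ 2)]
  have L := half_bound' wm1 w0 w1 w2 hw1 hw2 hw3 hw4 (fun z => f (((p + 1 : ℕ) : ℤ) - z)) (p + 1)
    (by simp only [hf]; apply extZ_of_not; push_cast; omega)
  have R := half_bound' wm1 w0 w1 w2 hw1 hw2 hw3 hw4 (fun z => f (((p + 1 : ℕ) : ℤ) + z)) (q + 1)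
    (by simp only [hf]; apply extZ_of_not; push_cast; omega)
  have gL : ∑ k ∈ Finset.range (p + 1), g (((p + 1 : ℕ) : ℤ) - (k + 1)) =
      α * ∑ k ∈ Finset.range (p + 1), ((k : ℝ) + 1) *
        (w2 * f (((p + 1 : ℕ) : ℤ) - (k - 1)) + w1 * f (((p + 1 : ℕ) : ℤ) - k)
        + w0 * f (((p + 1 : ℕ) : ℤ) - (k + 1)) + wm1 * f (((p + 1 : ℕ) : ℤ) - (k + 2)))
        * f (((p + 1 : ℕ) : ℤ) - (k + 1)) := by
    rw [Finset.mul_sum]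
    apply Finset.sum_congr rfl
    intro k _
    simp only [hg]
    rw [if_pos (by omega)]
    rw [show (((p + 1 : ℕ) : ℤ) - (k + 1)) + 2 = ((p + 1 : ℕ) : ℤ) - (k - 1) by ring,
      show (((p + 1 : ℕ) : ℤ) - (k + 1)) + 1 = ((p + 1 : ℕ) : ℤ) - k by ring,
      show (((p + 1 : ℕ) : ℤ) - (k + 1)) - 1 = ((p + 1 : ℕ) : ℤ) - (k + 2) by ring]
    push_cast
    ring
  have gR : ∑ k ∈ Finset.range (q + 1), g (((p + 1 : ℕ) : ℤ) + (k + 1)) =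
      α * ∑ k ∈ Finset.range (q + 1), ((k : ℝ) + 1) *
        (w2 * f (((p + 1 : ℕ) : ℤ) + (k - 1)) + w1 * f (((p + 1 : ℕ) : ℤ) + k)
        + w0 * f (((p + 1 : ℕ) : ℤ) + (k + 1)) + wm1 * f (((p + 1 : ℕ) : ℤ) + (k + 2)))
        * f (((p + 1 : ℕ) : ℤ) + (k + 1)) := by
    rw [Finset.mul_sum]
    apply Finset.sum_congr rfl
    intro k _
    simp only [hg]
    rw [if_neg (by omega)]
    rw [show (((p + 1 : ℕ) : ℤ) + (k + 1)) - 2 = ((p + 1 : ℕ) : ℤ) + (k - 1) by ring,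
      show (((p + 1 : ℕ) : ℤ) + (k + 1)) - 1 = ((p + 1 : ℕ) : ℤ) + k by ring,
      show (((p + 1 : ℕ) : ℤ) + (k + 1)) + 1 = ((p + 1 : ℕ) : ℤ) + (k + 2) by ring]
    push_cast
    ring
  have g0 : g ((p + 1 : ℕ) : ℤ) = 0 := by
    simp [hg]
  rw [gL, gR, g0]
  have sL : f (((p + 1 : ℕ) : ℤ) - 1) ^ 2 ≤
      ∑ k ∈ Finset.range (p + 1), f (((p + 1 : ℕ) : ℤ) - (k + 1)) ^ 2 := by
    have := Finset.single_le_sum (s := Finset.range (p + 1))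
      (f := fun k : ℕ => f (((p + 1 : ℕ) : ℤ) - (k + 1)) ^ 2)
      (fun i _ => sq_nonneg _) (Finset.mem_range.mpr (Nat.succ_pos p))
    simpa using this
  have sR : f (((p + 1 : ℕ) : ℤ) + 1) ^ 2 ≤
      ∑ k ∈ Finset.range (q + 1), f (((p + 1 : ℕ) : ℤ) + (k + 1)) ^ 2 := by
    have := Finset.single_le_sum (s := Finset.range (q + 1))
      (f := fun k : ℕ => f (((p + 1 : ℕ) : ℤ) + (k + 1)) ^ 2)
      (fun i _ => sq_nonneg _) (Finset.mem_range.mpr (Nat.succ_pos q))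
    simpa using this
  simp only [sub_zero, add_zero, sub_neg_eq_add, ← sub_eq_add_neg] at L R
  have nL := (sq_nonneg _).trans sL
  have nR := (sq_nonneg _).trans sR
  set NL := ∑ k ∈ Finset.range (p + 1), f (((p + 1 : ℕ) : ℤ) - (k + 1)) ^ 2
  set NR := ∑ k ∈ Finset.range (q + 1), f (((p + 1 : ℕ) : ℤ) + (k + 1)) ^ 2
  have tL := mul_nonneg (neg_nonneg.mpr hw4) (sub_nonneg.mpr sL)
  have tR := mul_nonneg (neg_nonneg.mpr hw4) (sub_nonneg.mpr sR)
  have uL := mul_nonneg (neg_nonneg.mpr hw4) nL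
  have uR := mul_nonneg (neg_nonneg.mpr hw4) nR
  rw [add_zero, ← mul_add, mul_comm (|wm1| - 10*w2) α, mul_assoc]
  apply mul_le_mul_of_nonneg_left _ hα.le
  refine (add_le_add L R).trans ?_
  linarith

lemma kron_left {ι κ : Type*} [Fintype ι] [Fintype κ] [DecidableEq κ]
    (M : Matrix ι ι ℝ) (V : ι × κ → ℝ) :
    (Matrix.kroneckerMap (· * ·) M (1 : Matrix κ κ ℝ)).mulVec V ⬝ᵥ V =
      ∑ j, M.mulVec (fun i => V (i, j)) ⬝ᵥ (fun i => V (i, j)) := by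
  simp only [dotProduct, Matrix.mulVec, Fintype.sum_prod_type, Matrix.kroneckerMap_apply,
    Matrix.one_apply]
  rw [Finset.sum_comm]
  simp

lemma kron_right {ι κ : Type*} [Fintype ι] [Fintype κ] [DecidableEq ι]
    (M : Matrix κ κ ℝ) (V : ι × κ → ℝ) :
    (Matrix.kroneckerMap (· * ·) (1 : Matrix ι ι ℝ) M).mulVec V ⬝ᵥ V =
      ∑ i, M.mulVec (fun j => V (i, j)) ⬝ᵥ (fun j => V (i, j)) := by
  simp only [dotProduct, Matrix.mulVec, Fintype.sum_prod_type_right, Matrix.kroneckerMap_apply,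
    Matrix.one_apply]
  rw [Finset.sum_comm]
  simp

/-- The logarithmic ℓ2-norm of the full semidiscretisation matrix
A = ((σ²/2)D₂ − (r+λ)I₁)⊗I₂ + (D_xÃ_x)⊗I₂ + I₁⊗(D_yÃ_y) (Dirichlet boundary
conditions) satisfies μ₂[A] ≤ C̃ = (|w₋₁| − 10w₂)(α + β) − (r + λ). -/
theorem semidiscretisation_log_norm_bound
    (wm1 w0 w1 w2 : ℝ)
    (hw1 : wm1 + w0 + w1 + w2 = 0)
    (hw2 : -wm1 + w1 + 2*w2 = 1)
    (hw3 : wm1 + w1 + 4*w2 = 0)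
    (hw4 : w2 ≤ 0)
    (σ μ : ℝ) (α β : ℝ) (hα : 0 < α) (hβ : 0 < β)
    (r lam : ℝ) (hr : 0 ≤ r) (hlam : 0 ≤ lam)
    (m₁ m₂ : ℕ) (hm₁ : 4 ≤ m₁) (hm₂ : 4 ≤ m₂)
    (Δx Δy : ℝ) (hΔx : 0 < Δx) (hΔy : 0 < Δy) (xmin ymin : ℝ)
    (i₀ j₀ : ℕ) (hi₀l : 2 ≤ i₀) (hi₀u : i₀ ≤ m₁ - 2)
    (hj₀l : 2 ≤ j₀) (hj₀u : j₀ ≤ m₂ - 2)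
    (hx : xmin + (i₀ + 1) * Δx = μ)
    (hy : ymin + (j₀ + 1) * Δy = 0) :
    let x : ℕ → ℝ := fun i => xmin + (i + 1) * Δx
    let y : ℕ → ℝ := fun j => ymin + (j + 1) * Δy
    let a : ℕ → ℝ := fun i => α * (μ - x i)
    let b : ℕ → ℝ := fun j => -β * y j
    let A : Matrix (Fin (m₁+1) × Fin (m₂+1)) (Fin (m₁+1) × Fin (m₂+1)) ℝ :=
      Matrix.kroneckerMap (· * ·)
        ((σ^2/2) • D2mat m₁ Δx - (r + lam) • (1 : Matrix (Fin (m₁+1)) (Fin (m₁+1)) ℝ))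
        (1 : Matrix (Fin (m₂+1)) (Fin (m₂+1)) ℝ)
      + Matrix.kroneckerMap (· * ·)
          (Matrix.diagonal (fun i : Fin (m₁+1) => a i.val) * Atilde m₁ Δx a wm1 w0 w1 w2)
          (1 : Matrix (Fin (m₂+1)) (Fin (m₂+1)) ℝ)
      + Matrix.kroneckerMap (· * ·)
          (1 : Matrix (Fin (m₁+1)) (Fin (m₁+1)) ℝ)
          (Matrix.diagonal (fun j : Fin (m₂+1) => b j.val) * Atilde m₂ Δy b wm1 w0 w1 w2)
    ∀ V : Fin (m₁+1) × Fin (m₂+1) → ℝ,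
      (A.mulVec V) ⬝ᵥ V ≤ ((|wm1| - 10*w2) * (α + β) - (r + lam)) * (V ⬝ᵥ V) := by
  intro x y a b A V
  have n1 : ∑ j, (fun i => V (i, j)) ⬝ᵥ (fun i => V (i, j)) = V ⬝ᵥ V := by
    simp only [dotProduct, Fintype.sum_prod_type_right]
  have n2 : ∑ i, (fun j => V (i, j)) ⬝ᵥ (fun j => V (i, j)) = V ⬝ᵥ V := by
    simp only [dotProduct, Fintype.sum_prod_type]
  simp only [A]
  rw [Matrix.add_mulVec, Matrix.add_mulVec, add_dotProduct, add_dotProduct,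
    kron_left, kron_left, kron_right]
  have p1 : ∑ j, ((σ^2/2) • D2mat m₁ Δx - (r + lam) • (1 : Matrix (Fin (m₁+1)) (Fin (m₁+1)) ℝ)).mulVec
      (fun i => V (i, j)) ⬝ᵥ (fun i => V (i, j)) ≤ -(r + lam) * (V ⬝ᵥ V) := by
    rw [← n1, Finset.mul_sum]
    apply Finset.sum_le_sum
    intro j _
    rw [Matrix.sub_mulVec, Matrix.smul_mulVec, Matrix.smul_mulVec, Matrix.one_mulVec,
      sub_dotProduct, smul_dotProduct, smul_dotProduct, smul_eq_mul, smul_eq_mul]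
    have := mul_nonpos_of_nonneg_of_nonpos (show 0 ≤ σ^2/2 by positivity)
      (D2_nonpos m₁ Δx (fun i => V (i, j)))
    linarith
  have p2 := Finset.sum_le_sum (s := Finset.univ) fun (j : Fin (m₂+1)) _ =>
    conv_bound wm1 w0 w1 w2 hw1 hw2 hw3 hw4 m₁ hm₁ Δx α hΔx hα i₀ hi₀l hi₀u a
      (fun i => by simp only [a, x, ← hx]; ring) (fun i => V (i, j))
  have p3 := Finset.sum_le_sum (s := Finset.univ) fun (i : Fin (m₁+1)) _ =>
    conv_bound wm1 w0 w1 w2 hw1 hw2 hw3 hw4 m₂ hm₂ Δy β hΔy hβ j₀ hj₀l hj₀u b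
      (fun j => by
        have : ymin = -((j₀ + 1) * Δy) := by linarith
        simp only [b, y, this]; ring) (fun j => V (i, j))
  rw [← Finset.mul_sum, n1] at p2
  rw [← Finset.mul_sum, n2] at p3
  linarith
end

section
/- Let A, B be real N×N matrices, Ĉ ∈ ℝ with μ₂[A+B] ≤ Ĉ, T > 0, N_t ≥ 1, Δt = T/N_t with Ĉ·Δt ≤ 1, and t_n = nΔt. Let g : [0,T] → ℝ^N be continuous and let v : [0,T] → ℝ^N be three times continuously differentiable with ‖v'''(t)‖₂ ≤ M₃ for all t ∈ [0,T], and suppose the spatial truncation error δ(t) := v'(t) − (A+B)v(t) − g(t) satisfies ‖δ(t)‖₂ ≤ η for all t ∈ [0,T]. Define Vⁿ by V⁰ = v(0) and (I − (Δt/2)(A+B))V^{n+1} = (I + (Δt/2)(A+B))Vⁿ + (Δt/2)(g(t_n) + g(t_{n+1})). Then for every n with nΔt ≤ T, the global error satisfies ‖v(t_n) − Vⁿ‖₂ ≤ 2T·e^{2T·Ĉ⁺}·(η + (Δt²/12)·M₃), where Ĉ⁺ = max(Ĉ, 0). In particular, if η ≤ C₂(Δx² + Δy²), the global error is bounded by a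 constant times Δt² + Δx² + Δy². -/
open Matrix

/-- The Euclidean (ℓ2) norm of a vector. -/
noncomputable def l2norm {n : Type*} [Fintype n] (v : n → ℝ) : ℝ :=
  Real.sqrt (∑ i, (v i)^2)

theorem cn_l2norm_eq {N : ℕ} (v : Fin N → ℝ) : l2norm v = ‖(WithLp.toLp 2 v : EuclideanSpace ℝ (Fin N))‖ := by
  simp [l2norm, EuclideanSpace.norm_eq]

theorem cn_dot_eq {N : ℕ} (v w : Fin N → ℝ) :
    v ⬝ᵥ w = inner ℝ (WithLp.toLp 2 v : EuclideanSpace ℝ (Fin N)) (WithLp.toLp 2 w) := by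
  rw [EuclideanSpace.inner_toLp_toLp]
  simp [dotProduct_comm]

theorem cn_trapezoid {E : Type*} [NormedAddCommGroup E] [NormedSpace ℝ E]
    (u u1 u2 u3 : ℝ → E) (h0 : ∀ t, HasDerivAt u (u1 t) t) (h1 : ∀ t, HasDerivAt u1 (u2 t) t)
    (h2 : ∀ t, HasDerivAt u2 (u3 t) t) (a h M : ℝ) (hh : 0 ≤ h)
    (hM : ∀ t ∈ Set.Icc a (a + h), ‖u3 t‖ ≤ M) :
    ‖u (a + h) - u a - (h / 2) • (u1 a + u1 (a + h))‖ ≤ h ^ 3 / 12 * M := by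
  have hs : ∀ s : ℝ, HasDerivAt (fun s => a + s) 1 s := fun s => by
    simpa using (hasDerivAt_id s).const_add a
  have e0 : ∀ s, HasDerivAt (fun s => u (a + s)) (u1 (a + s)) s := fun s => by
    exact ((h0 (a + s)).scomp s (hs s)).congr_deriv (one_smul _ _)
  have e1 : ∀ s, HasDerivAt (fun s => u1 (a + s)) (u2 (a + s)) s := fun s => by
    exact ((h1 (a + s)).scomp s (hs s)).congr_deriv (one_smul _ _)
  have e2 : ∀ s, HasDerivAt (fun s => u2 (a + s)) (u3 (a + s)) s := fun s => by
    exact ((h2 (a + s)).scomp s (hs s)).congr_deriv (one_smul _ _)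
  have hhalf : ∀ s : ℝ, HasDerivAt (fun s : ℝ => s / 2) (1 / 2) s := fun s =>
    (hasDerivAt_id s).div_const 2
  have f1 : ∀ s, HasDerivAt (fun s => (1 / 2 : ℝ) • (u1 (a + s) - u1 a) - (s / 2) • u2 (a + s))
      (-(s / 2) • u3 (a + s)) s := fun s => by
    refine ((((e1 s).sub_const (u1 a)).const_smul (1 / 2 : ℝ)).sub
      ((hhalf s).smul (e2 s))).congr_deriv ?_
    module
  have f0 : ∀ s, HasDerivAt (fun s => u (a + s) - u a - (s / 2) • (u1 a + u1 (a + s)))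
      ((1 / 2 : ℝ) • (u1 (a + s) - u1 a) - (s / 2) • u2 (a + s)) s := fun s => by
    refine (((e0 s).sub_const (u a)).sub
      ((hhalf s).smul ((e1 s).const_add (u1 a)))).congr_deriv ?_
    module
  have b1 : ∀ s ∈ Set.Icc 0 h,
      ‖(1 / 2 : ℝ) • (u1 (a + s) - u1 a) - (s / 2) • u2 (a + s)‖ ≤ s ^ 2 / 4 * M := by
    intro s hs
    refine image_norm_le_of_norm_deriv_right_le_deriv_boundary
      (B := fun s => s ^ 2 / 4 * M) (B' := fun s => s / 2 * M)
      (fun s _ => (f1 s).continuousAt.continuousWithinAt) (fun s _ => (f1 s).hasDerivWithinAt)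
      (by simp) ?_ ?_ hs
    · intro s
      refine (((hasDerivAt_pow 2 s).div_const 4).mul_const M).congr_deriv ?_
      push_cast; ring
    · intro s hs
      have := hM (a + s) ⟨by linarith [hs.1], by linarith [hs.2]⟩
      rw [norm_smul, norm_neg, Real.norm_of_nonneg (by linarith [hs.1])]
      exact mul_le_mul_of_nonneg_left this (by linarith [hs.1])
  refine image_norm_le_of_norm_deriv_right_le_deriv_boundary
      (B := fun s => s ^ 3 / 12 * M) (B' := fun s => s ^ 2 / 4 * M)
      (fun s _ => (f0 s).continuousAt.continuousWithinAt) (fun s _ => (f0 s).hasDerivWithinAt)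
      (by simp) ?_ ?_ (Set.right_mem_Icc.2 hh)
  · intro s
    refine (((hasDerivAt_pow 3 s).div_const 12).mul_const M).congr_deriv ?_
    push_cast; ring
  · intro s hs
    exact b1 s ⟨hs.1, hs.2.le⟩

theorem cn_stability {E : Type*} [NormedAddCommGroup E] [InnerProductSpace ℝ E]
    (x y d m : E) (h C r : ℝ) (hh : 0 ≤ h) (hC : 0 ≤ C) (hCh : C * h ≤ 1)
    (hm : inner ℝ m (y + x) ≤ C * inner ℝ (y + x) (y + x))
    (hd : ‖d‖ ≤ h * r) (he : y - x = (h / 2) • m + d) :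
    ‖y‖ ≤ (1 + 2 * (C * h)) * ‖x‖ + 2 * (h * r) := by
  have hr : 0 ≤ h * r := (norm_nonneg d).trans hd
  have hCh0 : 0 ≤ C * h := mul_nonneg hC hh
  have k1 : ‖y‖ ^ 2 - ‖x‖ ^ 2 = inner ℝ (y - x) (y + x) := by
    rw [inner_sub_left, inner_add_right, inner_add_right, real_inner_self_eq_norm_sq,
      real_inner_self_eq_norm_sq, real_inner_comm]; ring
  have k2 : inner ℝ d (y + x) ≤ h * r * ‖y + x‖ :=
    (real_inner_le_norm d _).trans (mul_le_mul_of_nonneg_right hd (norm_nonneg _))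
  have k3 := norm_add_le y x
  rw [he, inner_add_left, real_inner_smul_left] at k1
  rw [real_inner_self_eq_norm_sq] at hm
  have ha := norm_nonneg x
  have hb := norm_nonneg y
  generalize ‖x‖ = p at *
  generalize ‖y‖ = q at *
  have hz := norm_nonneg (y + x)
  generalize ‖y + x‖ = z at *
  have k4 : q ^ 2 - p ^ 2 ≤ C * h / 2 * (q + p) ^ 2 + h * r * (q + p) := by
    have a1 := mul_le_mul_of_nonneg_left hm (by linarith : 0 ≤ h / 2)
    have a2 : z ^ 2 ≤ (q + p) ^ 2 := pow_le_pow_left₀ hz k3 2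
    have a3 := mul_le_mul_of_nonneg_left a2 (by linarith : 0 ≤ C * h / 2)
    have a4 := mul_le_mul_of_nonneg_left k3 hr
    nlinarith
  have k5 : q - p ≤ C * h / 2 * (q + p) + h * r := by
    rcases (add_nonneg hb ha).eq_or_lt with h0 | h0
    · have : q = 0 := by linarith
      have : p = 0 := by linarith
      subst_vars; simpa using hr
    · refine le_of_mul_le_mul_right ?_ h0
      nlinarith
  generalize h * r = ρ at *
  generalize C * h = c at *
  have k6 : (1 - c / 2) * q ≤ (1 - c / 2) * ((1 + 2 * c) * p + 2 * ρ) := by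
    nlinarith [mul_nonneg (mul_nonneg hCh0 (sub_nonneg.2 hCh)) ha, mul_nonneg (sub_nonneg.2 hCh) hr]
  exact le_of_mul_le_mul_left k6 (by linarith)

/-- Second-order convergence of the Crank–Nicolson scheme.
Let A, B be real N×N matrices with μ₂[A+B] ≤ Chat, T > 0, Δt = T/N_t with ChatΔt ≤ 1.
Let g be continuous on [0,T], let v be three times continuously differentiable
with ‖v'''(t)‖₂ ≤ M₃ on [0,T] and spatial truncation error
δ(t) = v'(t) − (A+B)v(t) − g(t) satisfying ‖δ(t)‖₂ ≤ η on [0,T].  If V⁰ = v(0)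
and (I − (Δt/2)(A+B))V^{n+1} = (I + (Δt/2)(A+B))Vⁿ + (Δt/2)(g(t_n) + g(t_{n+1})),
then ‖v(t_n) − Vⁿ‖₂ ≤ 2T·e^{2T·Chat⁺}·(η + (Δt²/12)M₃) whenever nΔt ≤ T.  In
particular, if η ≤ C₂(Δx² + Δy²), the global error is bounded by a constant
times Δt² + Δx² + Δy². -/
theorem crank_nicolson_global_convergence
    (N : ℕ) (A B : Matrix (Fin N) (Fin N) ℝ) (Chat : ℝ)
    (hμ : ∀ v : Fin N → ℝ, ((A + B).mulVec v) ⬝ᵥ v ≤ Chat * (v ⬝ᵥ v))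
    (T : ℝ) (hT : 0 < T) (Nt : ℕ) (hNt : 1 ≤ Nt)
    (Δt : ℝ) (hΔt : Δt = T / Nt) (hCΔt : Chat * Δt ≤ 1)
    (g : ℝ → Fin N → ℝ) (hg : ContinuousOn g (Set.Icc 0 T))
    (v : ℝ → Fin N → ℝ) (hv : ContDiff ℝ 3 v)
    (M₃ : ℝ) (hM₃ : ∀ t ∈ Set.Icc (0 : ℝ) T, l2norm (iteratedDeriv 3 v t) ≤ M₃)
    (η : ℝ)
    (hδ : ∀ t ∈ Set.Icc (0 : ℝ) T,
      l2norm (deriv v t - (A + B).mulVec (v t) - g t) ≤ η)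
    (V : ℕ → Fin N → ℝ) (hV0 : V 0 = v 0)
    (hstep : ∀ n : ℕ,
      (1 - (Δt/2) • (A + B)).mulVec (V (n+1))
        = (1 + (Δt/2) • (A + B)).mulVec (V n)
          + (Δt/2) • (g ((n : ℝ) * Δt) + g (((n : ℝ) + 1) * Δt))) :
    (∀ n : ℕ, (n : ℝ) * Δt ≤ T →
      l2norm (v ((n : ℝ) * Δt) - V n)
        ≤ 2 * T * Real.exp (2 * T * (max Chat 0)) * (η + (Δt^2/12) * M₃)) ∧
    (∀ C₂ Δx Δy : ℝ, η ≤ C₂ * (Δx^2 + Δy^2) →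
      ∃ C : ℝ, ∀ n : ℕ, (n : ℝ) * Δt ≤ T →
        l2norm (v ((n : ℝ) * Δt) - V n) ≤ C * (Δt^2 + Δx^2 + Δy^2)) := by
  have hNt' : (0 : ℝ) < Nt := by exact_mod_cast hNt
  have hpos : 0 < Δt := by rw [hΔt]; positivity
  have h0T : (0 : ℝ) ∈ Set.Icc (0 : ℝ) T := ⟨le_rfl, hT.le⟩
  have hη : 0 ≤ η := (Real.sqrt_nonneg _).trans (hδ 0 h0T)
  have hM0 : 0 ≤ M₃ := (Real.sqrt_nonneg _).trans (hM₃ 0 h0T)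
  set ρ := η + (Δt^2/12) * M₃ with hρ
  have hρ0 : 0 ≤ ρ := by positivity
  set c := max Chat 0 with hc
  have hc0 : 0 ≤ c := le_max_right _ _
  have hcΔ : c * Δt ≤ 1 := by
    rcases max_choice Chat 0 with h | h <;> rw [hc, h]
    · exact hCΔt
    · simp
  let L : (Fin N → ℝ) →L[ℝ] EuclideanSpace ℝ (Fin N) :=
    ((EuclideanSpace.equiv (Fin N) ℝ).symm : (Fin N → ℝ) →L[ℝ] EuclideanSpace ℝ (Fin N))
  have hL : ∀ w, L w = WithLp.toLp 2 w := fun w => rfl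
  have hnL : ∀ w, l2norm w = ‖L w‖ := fun w => cn_l2norm_eq w
  have hdv : ∀ k : ℕ, k < 3 → ∀ t, HasDerivAt (fun s => L (iteratedDeriv k v s))
      (L (iteratedDeriv (k + 1) v t)) t := by
    intro k hk t
    have hd : Differentiable ℝ (iteratedDeriv k v) :=
      hv.differentiable_iteratedDeriv k (by exact_mod_cast hk)
    have := (hd t).hasDerivAt
    rw [iteratedDeriv_succ]
    exact L.hasFDerivAt.comp_hasDerivAt t this
  have key : ∀ n : ℕ, ((n : ℝ) + 1) * Δt ≤ T →
      l2norm (v (((n : ℝ) + 1) * Δt) - V (n + 1))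
        ≤ (1 + 2 * (c * Δt)) * l2norm (v ((n : ℝ) * Δt) - V n) + 2 * (Δt * ρ) := by
    intro n hn
    have hn0 : (0 : ℝ) ≤ n * Δt := by positivity
    have hab : ((n : ℝ) + 1) * Δt = n * Δt + Δt := by ring
    have htr := cn_trapezoid _ _ _ _ (hdv 0 (by norm_num)) (hdv 1 (by norm_num))
      (hdv 2 (by norm_num)) (n * Δt) Δt M₃ hpos.le (by
        intro t ht
        rw [← hnL]
        exact hM₃ t ⟨hn0.trans ht.1, by linarith [ht.2]⟩)
    have hst := hstep n
    rw [hab] at hst hn ⊢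
    have d0 := hδ (n * Δt) ⟨hn0, by linarith⟩
    have d1 := hδ (n * Δt + Δt) ⟨by linarith, hn⟩
    simp only [iteratedDeriv_zero, zero_add, iteratedDeriv_one] at htr
    rw [hnL] at d0 d1
    rw [hnL, hnL]
    generalize (n : ℝ) * Δt = a at *
    set b := a + Δt
    set e0 := v a - V n with he0
    set e1 := v b - V (n + 1) with he1
    set δ0 := deriv v a - (A + B).mulVec (v a) - g a with hδ0
    set δ1 := deriv v b - (A + B).mulVec (v b) - g b with hδ1
    set τ := v b - v a - (Δt / 2) • (deriv v a + deriv v b) with hτ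
    refine cn_stability (L e0) (L e1) (L (τ + (Δt / 2) • (δ0 + δ1)))
      (L ((A + B).mulVec (e1 + e0))) Δt c ρ hpos.le hc0 hcΔ ?_ ?_ ?_
    · rw [← map_add, hL, hL, ← cn_dot_eq, ← cn_dot_eq]
      refine (hμ _).trans (mul_le_mul_of_nonneg_right (le_max_left _ _) ?_)
      exact Finset.sum_nonneg fun i _ => mul_self_nonneg _
    · have htr' : ‖L τ‖ ≤ Δt ^ 3 / 12 * M₃ := by
        simpa only [hτ, map_sub, map_add, map_smul] using htr
      rw [map_add, map_smul, map_add]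
      have q1 := norm_add_le (L τ) ((Δt / 2) • (L δ0 + L δ1))
      have q2 := norm_add_le (L δ0) (L δ1)
      rw [norm_smul, Real.norm_of_nonneg (by linarith)] at q1
      have q3 : Δt / 2 * ‖L δ0 + L δ1‖ ≤ Δt / 2 * (η + η) :=
        mul_le_mul_of_nonneg_left (by linarith) (by linarith)
      rw [hρ]
      nlinarith
    · rw [← map_sub, ← map_smul, ← map_add]
      congr 1
      rw [Matrix.sub_mulVec, Matrix.add_mulVec, Matrix.one_mulVec, Matrix.one_mulVec,
        Matrix.smul_mulVec, Matrix.smul_mulVec] at hst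
      have hst' : V (n + 1) = V n + (Δt / 2) • (A + B).mulVec (V n) + (Δt / 2) • (g a + g b)
          + (Δt / 2) • (A + B).mulVec (V (n + 1)) := by
        rw [← hst]; abel
      have h1 : e1 - e0 = v b - v a - (V (n + 1) - V n) := by rw [he1, he0]; abel
      have h2 : V (n + 1) - V n = (Δt / 2) • (A + B).mulVec (V n) + (Δt / 2) • (g a + g b)
          + (Δt / 2) • (A + B).mulVec (V (n + 1)) := by
        nth_rewrite 1 [hst']; abel
      rw [h1, h2, hτ, hδ0, hδ1, he0, he1, Matrix.mulVec_add, Matrix.mulVec_sub, Matrix.mulVec_sub]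
      module
  have main : ∀ n : ℕ, (n : ℝ) * Δt ≤ T →
      l2norm (v ((n : ℝ) * Δt) - V n) ≤ 2 * (n * Δt) * (1 + 2 * (c * Δt)) ^ n * ρ := by
    intro n
    induction n with
    | zero => intro _; simp [hV0, l2norm]
    | succ n ih =>
      intro hn
      push_cast at hn ⊢
      have i1 := ih (by nlinarith)
      have i2 := key n hn
      have hE : 1 ≤ 1 + 2 * (c * Δt) := by
        have : 0 ≤ c * Δt := by positivity
        linarith
      have i3 := mul_le_mul_of_nonneg_left i1 (by linarith : 0 ≤ 1 + 2 * (c * Δt))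
      have i4 : 1 ≤ (1 + 2 * (c * Δt)) ^ (n + 1) := one_le_pow₀ hE
      have i5 := mul_le_mul_of_nonneg_left i4 (by positivity : 0 ≤ 2 * (Δt * ρ))
      refine i2.trans ((add_le_add i3 (by simpa using i5)).trans (le_of_eq ?_))
      ring
  have part1 : ∀ n : ℕ, (n : ℝ) * Δt ≤ T →
      l2norm (v ((n : ℝ) * Δt) - V n) ≤ 2 * T * Real.exp (2 * T * c) * ρ := by
    intro n hn
    refine (main n hn).trans (mul_le_mul_of_nonneg_right ?_ hρ0)
    have hE : (1 + 2 * (c * Δt)) ^ n ≤ Real.exp (2 * T * c) := by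
      have : 1 + 2 * (c * Δt) ≤ Real.exp (2 * (c * Δt)) := by
        linarith [Real.add_one_le_exp (2 * (c * Δt))]
      refine (pow_le_pow_left₀ (by positivity) this n).trans ?_
      rw [← Real.exp_nat_mul]
      exact Real.exp_le_exp.2 (by nlinarith)
    exact mul_le_mul (by linarith) hE (by positivity) (by positivity)
  refine ⟨part1, ?_⟩
  intro C₂ Δx Δy hC₂
  refine ⟨2 * T * Real.exp (2 * T * c) * (|C₂| + M₃ / 12), fun n hn => (part1 n hn).trans ?_⟩
  rw [mul_assoc (2 * T * Real.exp (2 * T * c))]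
  refine mul_le_mul_of_nonneg_left ?_ (by positivity)
  have j1 : C₂ * (Δx^2 + Δy^2) ≤ |C₂| * (Δx^2 + Δy^2) :=
    mul_le_mul_of_nonneg_right (le_abs_self _) (by positivity)
  have j2 : 0 ≤ |C₂| * Δt^2 := by positivity
  have j3 : 0 ≤ M₃ * (Δx^2 + Δy^2) := by positivity
  rw [hρ]
  nlinarith
end

section
/- Let θ ∈ [1/4, 1/2], ν ∈ (0, 1/θ), and γ = (R_θ(ν) − 1)/ν. Let M be a real N×N matrix and c ∈ ℝ with μ₂[M] ≤ c, and let Δt > 0 satisfy cΔt ≤ ν. Then I − θΔtM is invertible and the DIRK amplification matrix R_θ(ΔtM) = (I − θΔtM)^{−2}(I + (1−2θ)ΔtM + (1/2 − 2θ + θ²)(ΔtM)²) satisfies ‖R_θ(ΔtM)ⁿ‖₂ ≤ (1 + γ·Δt·c⁺)ⁿ ≤ e^{γT·c⁺} for every integer n ≥ 0 with nΔt ≤ T, where c⁺ = max(c, 0). -/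
open Matrix

/-- The DIRK stability function, restricted to real arguments. -/
noncomputable def Rre (θ x : ℝ) : ℝ :=
  (1 + (1 - 2*θ)*x + (1/2 - 2*θ + θ^2)*x^2) / (1 - θ*x)^2

theorem dirk_contr {N : ℕ} (U : Matrix (Fin N) (Fin N) ℝ)
    (hU : ∀ v : Fin N → ℝ, (U *ᵥ v) ⬝ᵥ (U *ᵥ v) ≤ v ⬝ᵥ v)
    (p0 p1 p2 : ℝ) (h1 : 0 ≤ p1) (h2 : 0 ≤ p2)
    (hg : 0 ≤ p1 * (p0 + p2) + 4 * p0 * p2) (v : Fin N → ℝ) :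
    ((p0 • (1 : Matrix (Fin N) (Fin N) ℝ) + p1 • U + p2 • U ^ 2) *ᵥ v) ⬝ᵥ
      ((p0 • (1 : Matrix (Fin N) (Fin N) ℝ) + p1 • U + p2 • U ^ 2) *ᵥ v)
      ≤ (p0 + p1 + p2) ^ 2 * (v ⬝ᵥ v) := by
  have e : (p0 • (1 : Matrix (Fin N) (Fin N) ℝ) + p1 • U + p2 • U ^ 2) *ᵥ v
      = p0 • v + p1 • (U *ᵥ v) + p2 • (U *ᵥ (U *ᵥ v)) := by
    simp [add_mulVec, smul_mulVec, pow_two]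
  rw [e]
  have k0 := hU v
  have k1 := hU (U *ᵥ v)
  have kp := hU (p1 • v + p2 • (U *ᵥ v))
  have km := hU ((-2 : ℝ) • v + (1 : ℝ) • (U *ᵥ v))
  simp only [mulVec_add, mulVec_smul] at kp km
  generalize U *ᵥ (U *ᵥ v) = e2 at *
  generalize U *ᵥ v = e1 at *
  have n01 : 0 ≤ (v - e1) ⬝ᵥ (v - e1) := by
    simpa using dotProduct_star_self_nonneg (v - e1)
  have n02 : 0 ≤ (v - e2) ⬝ᵥ (v - e2) := by
    simpa using dotProduct_star_self_nonneg (v - e2)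
  have n12 : 0 ≤ (e1 - e2) ⬝ᵥ (e1 - e2) := by
    simpa using dotProduct_star_self_nonneg (e1 - e2)
  have n3 : 0 ≤ ((v - e1) - (e1 - e2)) ⬝ᵥ ((v - e1) - (e1 - e2)) := by
    simpa using dotProduct_star_self_nonneg ((v - e1) - (e1 - e2))
  simp only [add_dotProduct, dotProduct_add, sub_dotProduct, dotProduct_sub, smul_dotProduct,
    dotProduct_smul, smul_eq_mul, dotProduct_comm e1 v, dotProduct_comm e2 v,
    dotProduct_comm e2 e1] at *
  generalize v ⬝ᵥ v = g00 at *
  generalize v ⬝ᵥ e1 = g01 at *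
  generalize v ⬝ᵥ e2 = g02 at *
  generalize e1 ⬝ᵥ e1 = g11 at *
  generalize e1 ⬝ᵥ e2 = g12 at *
  generalize e2 ⬝ᵥ e2 = g22 at *
  rcases le_total 0 p0 with h0 | h0
  · have a1 : g01 ≤ g00 := by linarith
    have a2 : g02 ≤ g00 := by linarith
    have a3 : g12 ≤ g00 := by linarith
    have a4 : g22 ≤ g00 := by linarith
    have b1 := mul_le_mul_of_nonneg_left a1 (mul_nonneg h0 h1)
    have b2 := mul_le_mul_of_nonneg_left a2 (mul_nonneg h0 h2)
    have b3 := mul_le_mul_of_nonneg_left a3 (mul_nonneg h1 h2)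
    have b4 := mul_le_mul_of_nonneg_left a4 (mul_nonneg h2 h2)
    have b5 := mul_le_mul_of_nonneg_left k0 (mul_nonneg h1 h1)
    nlinarith
  · have hm : 0 ≤ -(p0 * p2) := by nlinarith
    have c1 := mul_nonneg hg n01
    have c2 := mul_nonneg hm n3
    have c3 := mul_le_mul_of_nonneg_left k0 hg
    have c4 := mul_le_mul_of_nonneg_left k0 hm
    have c5 := mul_le_mul_of_nonneg_left k0 (mul_nonneg h2 h2)
    have c6 := mul_le_mul_of_nonneg_left km hm
    linarith

theorem dirk_mono (θ ν x : ℝ) (h1 : 1/4 ≤ θ) (h2 : θ ≤ 1/2) (hx : 0 ≤ x) (hxν : x ≤ ν)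
    (hν : θ * ν < 1) (hν0 : 0 < ν) :
    Rre θ x ≤ 1 + (Rre θ ν - 1)/ν * x ∧ 0 ≤ (Rre θ ν - 1)/ν := by
  have hθx : θ * x < 1 := by nlinarith
  have f1 : 0 < 1 - θ * x := by linarith
  have f2 : 0 < 1 - θ * ν := by linarith
  have e : ∀ y, 0 < 1 - θ * y →
      Rre θ y = 1 + y * ((1 + (1/2 - 2*θ) * y) / (1 - θ*y)^2) := by
    intro y hy
    unfold Rre
    field_simp
    ring
  have eν : (Rre θ ν - 1)/ν = (1 + (1/2 - 2*θ) * ν) / (1 - θ*ν)^2 := by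
    rw [e ν f2]; field_simp; ring
  rw [eν, e x f1]
  constructor
  · have : (1 + (1/2 - 2*θ) * x) / (1 - θ*x)^2 ≤ (1 + (1/2 - 2*θ) * ν) / (1 - θ*ν)^2 := by
      rw [div_le_div_iff₀ (by positivity) (by positivity)]
      have q0 : 0 ≤ θ * ((1 - θ * x) * (1 - θ * ν)) := by positivity
      have q1 : (θ * x) * (θ * ν) ≤ 1 := by
        have : 0 ≤ θ * x := by positivity
        nlinarith
      have q2 : 0 ≤ (1/2 - θ) * (1 - (θ * x) * (θ * ν)) :=
        mul_nonneg (by linarith) (by linarith)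
      have q3 : 0 ≤ (ν - x) * (θ * ((1 - θ * x) * (1 - θ * ν))
          + (1/2 - θ) * (1 - (θ * x) * (θ * ν))) := mul_nonneg (by linarith) (by linarith)
      linarith
    have := mul_le_mul_of_nonneg_left this hx
    linarith
  · apply div_nonneg _ (by positivity)
    nlinarith

theorem dirk_step (θ : ℝ) (h1 : 1/4 ≤ θ) (h2 : θ ≤ 1/2) {N : ℕ}
    (A : Matrix (Fin N) (Fin N) ℝ) (x : ℝ) (hx : 0 ≤ x) (hθx : θ * x < 1)
    (hA : ∀ v : Fin N → ℝ, (A *ᵥ v) ⬝ᵥ v ≤ x * (v ⬝ᵥ v)) :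
    IsUnit (1 - θ • A) ∧ 0 ≤ Rre θ x ∧ ∀ v : Fin N → ℝ,
      ((((1 - θ • A)⁻¹) ^ 2 * (1 + (1 - 2*θ) • A + (1/2 - 2*θ + θ^2) • A ^ 2)) *ᵥ v) ⬝ᵥ
      ((((1 - θ • A)⁻¹) ^ 2 * (1 + (1 - 2*θ) • A + (1/2 - 2*θ + θ^2) • A ^ 2)) *ᵥ v)
      ≤ (Rre θ x) ^ 2 * (v ⬝ᵥ v) := by
  have hθ : 0 < θ := by linarith
  have f1 : 0 < 1 - θ * x := by linarith
  have hu : IsUnit (1 - θ • A) := by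
    rw [← mulVec_injective_iff_isUnit]
    rw [← coe_mulVecLin, ← LinearMap.ker_eq_bot, LinearMap.ker_eq_bot']
    intro y hy
    have hy' : y = θ • (A *ᵥ y) := by
      simpa [sub_mulVec, smul_mulVec, sub_eq_zero] using hy
    have h3 : y ⬝ᵥ y = θ * ((A *ᵥ y) ⬝ᵥ y) := by
      conv_lhs => lhs; rw [hy']
      simp [smul_dotProduct]
    have h4 : 0 ≤ y ⬝ᵥ y := by simpa using dotProduct_star_self_nonneg y
    have h5 := mul_le_mul_of_nonneg_left (hA y) hθ.le
    have h6 : y ⬝ᵥ y = 0 := by nlinarith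
    exact dotProduct_self_eq_zero.mp h6
  refine ⟨hu, ?_⟩
  obtain ⟨B, hB⟩ : ∃ B, B = 1 - θ • A := ⟨_, rfl⟩
  rw [← hB] at hu ⊢
  have hd : IsUnit B.det := (isUnit_iff_isUnit_det B).mp hu
  have hWB : B⁻¹ * B = 1 := nonsing_inv_mul B hd
  have hBW : B * B⁻¹ = 1 := mul_nonsing_inv B hd
  obtain ⟨W, hW⟩ : ∃ W, W = B⁻¹ := ⟨_, rfl⟩
  rw [← hW] at hWB hBW ⊢
  obtain ⟨s, hs⟩ : ∃ s, s = θ * x / (1 - θ * x) := ⟨_, rfl⟩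
  have hs0 : 0 ≤ s := by rw [hs]; positivity
  have hω : (1 + s) * (1 - θ * x) = 1 := by rw [hs]; field_simp; ring
  obtain ⟨U, hUdef⟩ : ∃ U, U = (2 * (1 - θ * x)) • W - 1 := ⟨_, rfl⟩
  have hWU : W = ((1 + s) / 2) • (1 + U) := by
    rw [hUdef, add_sub_cancel, smul_smul]
    rw [show (1 + s) / 2 * (2 * (1 - θ * x)) = 1 by linarith, one_smul]
  have hU : ∀ v : Fin N → ℝ, (U *ᵥ v) ⬝ᵥ (U *ᵥ v) ≤ v ⬝ᵥ v := by
    intro v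
    obtain ⟨y, hy⟩ : ∃ y, y = W *ᵥ v := ⟨_, rfl⟩
    have hv : v = y - θ • (A *ᵥ y) := by
      have : B *ᵥ y = v := by rw [hy, mulVec_mulVec, hBW, one_mulVec]
      rw [← this, hB]; simp [sub_mulVec, smul_mulVec]
    have hUv : U *ᵥ v = (2 * (1 - θ * x)) • y - v := by
      rw [hUdef, sub_mulVec, smul_mulVec, ← hy, one_mulVec]
    have h3 := hA y
    rw [hUv, hv]
    simp only [sub_dotProduct, dotProduct_sub, smul_dotProduct,
      dotProduct_smul, smul_eq_mul, dotProduct_comm y (A *ᵥ y)]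
    have := mul_le_mul_of_nonneg_left h3 (mul_pos f1 hθ).le
    linarith
  have ha : 0 ≤ θ - 1/4 := by linarith
  have hb : 0 ≤ 1/2 - θ := by linarith
  obtain ⟨p0, hp0⟩ : ∃ p, p = (θ - 1/4) * (s - (1/2 - θ)) + (1/2 - θ) * s^2/4 := ⟨_, rfl⟩
  obtain ⟨p1, hp1⟩ : ∃ p, p = (1 + s) * ((θ - 1/4) + (1/2 - θ) * s/2) := ⟨_, rfl⟩
  obtain ⟨p2, hp2⟩ : ∃ p, p = (1/2 - θ) * (1 + s)^2/4 := ⟨_, rfl⟩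
  have g1 : 0 ≤ p1 := by rw [hp1]; positivity
  have g2 : 0 ≤ p2 := by rw [hp2]; positivity
  have g02 : 0 ≤ p0 + p2 := by
    have : p0 + p2 = (1/2 - θ)^2 + s * ((θ - 1/4) + (1/2-θ)/2) + (1/2-θ) * s^2/2 := by
      rw [hp0, hp2]; ring
    rw [this]; positivity
  have hg : 0 ≤ p1 * (p0 + p2) + 4 * p0 * p2 := by
    have : p1 * (p0 + p2) + 4 * p0 * p2 = (1 + s) * (
        s * ((1/2-θ)^3/2 + (θ-1/4) * ((θ - 1/4) + (1/2-θ)/2) + (1/2-θ) * (θ-1/4) * (1/2+θ))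
        + s^2 * ((θ-1/4)*(1/2-θ)/2 + (1/2-θ)/2 * ((θ - 1/4) + (1/2-θ)/2)
          + (1/2-θ) * (θ-1/4) + (1/2-θ)^2/4)
        + s^3 * ((1/2-θ)^2/4 + (1/2-θ)^2/4)) := by
      rw [hp0, hp1, hp2]; ring
    rw [this]; positivity
  have hS : Rre θ x = (p0 + p1 + p2) / θ^2 := by
    rw [hp0, hp1, hp2, hs]; unfold Rre; field_simp; ring
  have key : θ^2 • (W ^ 2 * (1 + (1 - 2*θ) • A + (1/2 - 2*θ + θ^2) • A ^ 2))
      = p0 • (1 : Matrix (Fin N) (Fin N) ℝ) + p1 • U + p2 • U ^ 2 := by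
    have e1 : θ^2 • (1 + (1 - 2*θ) • A + (1/2 - 2*θ + θ^2) • A ^ 2)
        = (1/2 - θ) • (1 : Matrix (Fin N) (Fin N) ℝ) + (3*θ - 1) • B
          + (1/2 - 2*θ + θ^2) • (B * B) := by
      rw [hB]
      simp only [pow_two A, mul_sub, sub_mul, mul_one, one_mul, smul_mul_assoc, mul_smul_comm]
      module
    have e2 : W * W * B = W := by rw [mul_assoc, hWB, mul_one]
    have e3 : W * W * (B * B) = 1 := by rw [← mul_assoc, e2, hWB]
    rw [← mul_smul_comm, e1, mul_add, mul_add, mul_smul_comm, mul_smul_comm, mul_smul_comm,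
      pow_two W, e2, e3, mul_one, hWU, hp0, hp1, hp2]
    simp only [pow_two U, mul_add, add_mul, mul_one, one_mul, smul_mul_assoc, mul_smul_comm]
    module
  refine ⟨by rw [hS]; apply div_nonneg (by linarith) (by positivity), fun v => ?_⟩
  have := dirk_contr U hU p0 p1 p2 g1 g2 hg v
  rw [← key, smul_mulVec, smul_dotProduct, dotProduct_smul, smul_eq_mul, smul_eq_mul] at this
  have hS' : p0 + p1 + p2 = θ^2 * Rre θ x := by rw [hS]; field_simp
  rw [hS'] at this
  have hθ4 : 0 < θ^2 * θ^2 := by positivity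
  refine le_of_mul_le_mul_left ?_ hθ4
  linarith

theorem l2norm_eq_sqrt {N : ℕ} (v : Fin N → ℝ) : l2norm v = Real.sqrt (v ⬝ᵥ v) := by
  simp [l2norm, dotProduct, pow_two]

/-- Let θ ∈ [1/4, 1/2], ν ∈ (0, 1/θ), and γ = (R_θ(ν) − 1)/ν.  Let
M be a real N×N matrix and c ∈ ℝ with μ₂[M] ≤ c, and let Δt > 0 satisfy cΔt ≤ ν.
Then I − θΔtM is invertible and the DIRK amplification matrix
R_θ(ΔtM) = (I − θΔtM)⁻²(I + (1−2θ)ΔtM + (1/2 − 2θ + θ²)(ΔtM)²) satisfies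
‖R_θ(ΔtM)ⁿ‖₂ ≤ (1 + γΔt c⁺)ⁿ ≤ e^{γT c⁺} for every n ≥ 0 with nΔt ≤ T. -/
theorem dirk_l2_stability
    (θ : ℝ) (hθ : θ ∈ Set.Icc (1/4 : ℝ) (1/2))
    (ν : ℝ) (hν : ν ∈ Set.Ioo (0 : ℝ) (1/θ))
    (N : ℕ) (M : Matrix (Fin N) (Fin N) ℝ) (c : ℝ)
    (hM : ∀ v : Fin N → ℝ, (M.mulVec v) ⬝ᵥ v ≤ c * (v ⬝ᵥ v))
    (Δt : ℝ) (hΔt : 0 < Δt) (hc : c * Δt ≤ ν) (T : ℝ) :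
    IsUnit (1 - (θ * Δt) • M) ∧
    ∀ n : ℕ, (n : ℝ) * Δt ≤ T → ∀ v : Fin N → ℝ,
      l2norm (((((1 - (θ * Δt) • M)⁻¹) ^ 2
          * (1 + ((1 - 2*θ) * Δt) • M + (1/2 - 2*θ + θ^2) • ((Δt • M) ^ 2))) ^ n).mulVec v)
        ≤ (1 + ((Rre θ ν - 1)/ν) * Δt * (max c 0))^n * l2norm v ∧
      (1 + ((Rre θ ν - 1)/ν) * Δt * (max c 0))^n * l2norm v
        ≤ Real.exp (((Rre θ ν - 1)/ν) * T * (max c 0)) * l2norm v := by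
  obtain ⟨h1, h2⟩ := hθ
  obtain ⟨hν0, hν1⟩ := hν
  have hθ0 : 0 < θ := by linarith
  have hθν : θ * ν < 1 := by
    rw [lt_div_iff₀ hθ0] at hν1; linarith
  have hx0 : 0 ≤ Δt * max c 0 := mul_nonneg hΔt.le (le_max_right _ _)
  have hxν : Δt * max c 0 ≤ ν := by
    rcases le_total c 0 with h | h
    · rw [max_eq_right h]; linarith
    · rw [max_eq_left h]; linarith
  have hθx : θ * (Δt * max c 0) < 1 := by nlinarith
  have hnn : ∀ v : Fin N → ℝ, 0 ≤ v ⬝ᵥ v := fun v => by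
    simpa using dotProduct_star_self_nonneg v
  have hA : ∀ v : Fin N → ℝ, ((Δt • M) *ᵥ v) ⬝ᵥ v ≤ (Δt * max c 0) * (v ⬝ᵥ v) := by
    intro v
    rw [smul_mulVec, smul_dotProduct, smul_eq_mul, mul_assoc]
    exact mul_le_mul_of_nonneg_left
      ((hM v).trans (mul_le_mul_of_nonneg_right (le_max_left _ _) (hnn v))) hΔt.le
  obtain ⟨hu, hR0, hstep⟩ := dirk_step θ h1 h2 (Δt • M) _ hx0 hθx hA
  obtain ⟨hm, hγ⟩ := dirk_mono θ ν _ h1 h2 hx0 hxν hθν hν0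
  simp only [smul_smul] at hu hstep
  refine ⟨hu, ?_⟩
  generalize (Rre θ ν - 1)/ν = γ at *
  generalize ((1 - (θ * Δt) • M)⁻¹) ^ 2
          * (1 + ((1 - 2*θ) * Δt) • M + (1/2 - 2*θ + θ^2) • ((Δt • M) ^ 2)) = R at *
  have hq0 : 0 ≤ 1 + γ * Δt * max c 0 := by
    rw [mul_assoc]; positivity
  have hone : ∀ v, l2norm (R *ᵥ v) ≤ (1 + γ * Δt * max c 0) * l2norm v := by
    intro v
    rw [l2norm_eq_sqrt, l2norm_eq_sqrt, mul_assoc γ]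
    refine le_trans (Real.sqrt_le_sqrt (hstep v)) ?_
    rw [Real.sqrt_mul (sq_nonneg _), Real.sqrt_sq hR0]
    exact mul_le_mul_of_nonneg_right hm (Real.sqrt_nonneg _)
  intro n hn v
  have hl : 0 ≤ l2norm v := Real.sqrt_nonneg _
  constructor
  · clear hn
    induction n with
    | zero => simp
    | succ k ih =>
      rw [pow_succ' R, ← mulVec_mulVec, pow_succ' (1 + γ * Δt * max c 0), mul_assoc]
      exact (hone _).trans (mul_le_mul_of_nonneg_left ih hq0)
  · refine mul_le_mul_of_nonneg_right ?_ hl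
    have h3 : 1 + γ * Δt * max c 0 ≤ Real.exp (γ * Δt * max c 0) := by
      rw [add_comm]; exact Real.add_one_le_exp _
    refine (pow_le_pow_left₀ hq0 h3 n).trans ?_
    rw [← Real.exp_nat_mul, Real.exp_le_exp]
    have h4 : 0 ≤ γ * max c 0 := mul_nonneg hγ (le_max_right _ _)
    have := mul_le_mul_of_nonneg_left hn h4
    linarith
end
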